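/- Let f : X → Y be a fibration between compact gluing cubespaces and s ≥ 0. Then the projection π_{f,s} : X → X/∼_{f,s} is a fibration, and f factors through an s-fibration g : X/∼_{f,s} → Y, i.e., f = g ∘ π_{f,s} with g a fibration having (s+1)-uniqueness. -/

import Mathlib

open Function Set

/-- The all-ones vertex `1⃗` of the discrete cube `{0,1}^k`. -/
def topVtx (k : ℕ) : Fin k → Bool := fun _ => true

/-- A family of cube sets on a space `X`: for each `k`, a set of `k`-configurations. -/
structure CubeFamily (X : Type*) where
  cubes : ∀ k : ℕ, Set ((Fin k → Bool) → X)

/-- A morphism of discrete cubes: each coordinate function is constantly `0`,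
constantly `1`, a coordinate `ω i`, or a negated coordinate `!ω i`. -/
def IsDiscreteCubeMorphism {k l : ℕ} (ρ : (Fin k → Bool) → (Fin l → Bool)) : Prop :=
  ∀ j : Fin l, (∀ ω, ρ ω j = false) ∨ (∀ ω, ρ ω j = true) ∨
    (∃ i : Fin k, ∀ ω, ρ ω j = ω i) ∨ (∃ i : Fin k, ∀ ω, ρ ω j = !(ω i))

/-- The cubespace axioms: cube sets are closed, `C^0(X) = X`, and cubes are stable
under precomposition with morphisms of discrete cubes. -/
def CubeFamily.IsCubespace {X : Type*} [TopologicalSpace X] (S : CubeFamily X) : Prop :=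
  (∀ k, IsClosed (S.cubes k)) ∧ S.cubes 0 = Set.univ ∧
    ∀ {k l : ℕ} (ρ : (Fin k → Bool) → (Fin l → Bool)), IsDiscreteCubeMorphism ρ →
      ∀ c ∈ S.cubes l, (fun ω => c (ρ ω)) ∈ S.cubes k

/-- A cubespace morphism: a continuous map sending cubes to cubes. -/
def IsMorphism {X Y : Type*} [TopologicalSpace X] [TopologicalSpace Y]
    (S : CubeFamily X) (T : CubeFamily Y) (f : X → Y) : Prop :=
  Continuous f ∧ ∀ k, ∀ c ∈ S.cubes k, (fun ω => f (c ω)) ∈ T.cubes k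

/-- `lam` is a `k`-corner: each lower face `{ω : ω i = 0}` restricts to a `(k-1)`-cube.
(The restriction of `lam` to the face `{ω : ω i = 0}` is a `(k-1)`-cube iff the
degenerate configuration `ω ↦ lam (update ω i false)` is a `k`-cube, by the
discrete-cube-morphism axiom; the value of `lam` at `topVtx k` is irrelevant here.) -/
def IsCubeCorner {X : Type*} (S : CubeFamily X) {k : ℕ} (lam : (Fin k → Bool) → X) : Prop :=
  ∀ i : Fin k, (fun ω => lam (Function.update ω i false)) ∈ S.cubes k

/-- Relative `k`-completion for `f : X → Y`: every `k`-corner in `X` whose `f`-image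
extends to a `k`-cube `c` of `Y` can be completed to a `k`-cube of `X` lying over `c`. -/
def HasCompletionAt {X Y : Type*} (S : CubeFamily X) (T : CubeFamily Y) (f : X → Y)
    (k : ℕ) : Prop :=
  ∀ (lam : (Fin k → Bool) → X) (c : (Fin k → Bool) → Y), IsCubeCorner S lam → c ∈ T.cubes k →
    (∀ ω, ω ≠ topVtx k → f (lam ω) = c ω) →
    ∃ c₀ ∈ S.cubes k, (∀ ω, ω ≠ topVtx k → c₀ ω = lam ω) ∧ (fun ω => f (c₀ ω)) = c

/-- A fibration: a cubespace morphism with `k`-completion for all `k ≥ 0`. -/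
def IsFibration {X Y : Type*} [TopologicalSpace X] [TopologicalSpace Y]
    (S : CubeFamily X) (T : CubeFamily Y) (f : X → Y) : Prop :=
  IsMorphism S T f ∧ ∀ k, HasCompletionAt S T f k

/-- Relative `k`-uniqueness: two `k`-cubes agreeing off the top vertex with equal
`f`-images are equal. -/
def HasUniquenessAt {X Y : Type*} (S : CubeFamily X) (T : CubeFamily Y) (f : X → Y)
    (k : ℕ) : Prop :=
  ∀ c ∈ S.cubes k, ∀ c' ∈ S.cubes k, (∀ ω, ω ≠ topVtx k → c ω = c' ω) →
    (fun ω => f (c ω)) = (fun ω => f (c' ω)) → c = c'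

/-- An `s`-fibration: a fibration with `(s+1)`-uniqueness. -/
def IsSFibration {X Y : Type*} [TopologicalSpace X] [TopologicalSpace Y]
    (S : CubeFamily X) (T : CubeFamily Y) (f : X → Y) (s : ℕ) : Prop :=
  IsFibration S T f ∧ HasUniquenessAt S T f (s + 1)

/-- Absolute fibrancy: every `k`-corner completes to a `k`-cube. -/
def IsFibrant {X : Type*} (S : CubeFamily X) : Prop :=
  ∀ (k : ℕ) (lam : (Fin k → Bool) → X), IsCubeCorner S lam →
    ∃ c₀ ∈ S.cubes k, ∀ ω, ω ≠ topVtx k → c₀ ω = lam ω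

/-- Absolute `k`-uniqueness. -/
def HasUnique {X : Type*} (S : CubeFamily X) (k : ℕ) : Prop :=
  ∀ c ∈ S.cubes k, ∀ c' ∈ S.cubes k, (∀ ω, ω ≠ topVtx k → c ω = c' ω) → c = c'

/-- Ergodicity: every pair of points is a `1`-cube. -/
def IsErgodic {X : Type*} (S : CubeFamily X) : Prop := S.cubes 1 = Set.univ

/-- Concatenation `[c₁, c₂]` of two `k`-configurations along the last coordinate. -/
def concatCube {X : Type*} {k : ℕ} (c₁ c₂ : (Fin k → Bool) → X) :
    (Fin (k + 1) → Bool) → X :=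
  fun ω => if ω (Fin.last k) = true then c₂ (fun i => ω i.castSucc)
           else c₁ (fun i => ω i.castSucc)

/-- The gluing property. -/
def IsGluing {X : Type*} (S : CubeFamily X) : Prop :=
  ∀ (k : ℕ) (c₁ c₂ c₃ : (Fin k → Bool) → X), c₁ ∈ S.cubes k → c₂ ∈ S.cubes k →
    c₃ ∈ S.cubes k → concatCube c₁ c₂ ∈ S.cubes (k + 1) →
    concatCube c₂ c₃ ∈ S.cubes (k + 1) → concatCube c₁ c₃ ∈ S.cubes (k + 1)

/-- The `s`-th canonical relation `x ∼ₛ x'`. -/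
def CanonRel {X : Type*} (S : CubeFamily X) (s : ℕ) (x x' : X) : Prop :=
  ∃ c ∈ S.cubes (s + 1), ∃ c' ∈ S.cubes (s + 1),
    (∀ ω, ω ≠ topVtx (s + 1) → c ω = c' ω) ∧ c (topVtx (s + 1)) = x ∧ c' (topVtx (s + 1)) = x'

/-- The `s`-th canonical relation relative to `f` : `x ∼_{f,s} x'`. -/
def RelCanonRel {X Y : Type*} (S : CubeFamily X) (f : X → Y) (s : ℕ) (x x' : X) : Prop :=
  CanonRel S s x x' ∧ f x = f x'

/-- The quotient cubespace `X/∼_{f,s}`: cubes are images of cubes of `X`. -/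
def quotFamilyRel {X Y : Type*} (S : CubeFamily X) (f : X → Y) (s : ℕ) :
    CubeFamily (Quot (RelCanonRel S f s)) :=
  ⟨fun k => {d | ∃ c ∈ S.cubes k, d = fun ω => Quot.mk _ (c ω)}⟩


namespace CubeAux

variable {X : Type*}

/-- Stability of a cube family under discrete-cube morphisms. -/
def Stab (S : CubeFamily X) : Prop :=
  ∀ {k l : ℕ} (ρ : (Fin k → Bool) → (Fin l → Bool)), IsDiscreteCubeMorphism ρ →
      ∀ c ∈ S.cubes l, (fun ω => c (ρ ω)) ∈ S.cubes k

lemma mor_of {k l : ℕ} (ρ : (Fin k → Bool) → (Fin l → Bool))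
    (h : ∀ j, (∃ b, ∀ ω, ρ ω j = b) ∨ ∃ (i : Fin k) (φ : Bool → Bool), ∀ ω, ρ ω j = φ (ω i)) :
    IsDiscreteCubeMorphism ρ := by
  intro j
  rcases h j with ⟨b, hb⟩ | ⟨i, φ, hφ⟩
  · cases b
    · exact Or.inl hb
    · exact Or.inr (Or.inl hb)
  · rcases h0 : φ false with _ | _ <;> rcases h1 : φ true with _ | _
    · left; intro ω; rw [hφ]; cases ω i <;> assumption
    · right; right; left; refine ⟨i, fun ω => ?_⟩; rw [hφ]; cases ω i <;> assumption
    · right; right; right; refine ⟨i, fun ω => ?_⟩; rw [hφ]; cases ω i <;> assumption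
    · right; left; intro ω; rw [hφ]; cases ω i <;> assumption

lemma glue_at {S : CubeFamily X} (hst : Stab S) (hg : IsGluing S) {k : ℕ} (i : Fin k)
    (A B : (Fin k → Bool) → X) (hA : A ∈ S.cubes k) (hB : B ∈ S.cubes k)
    (hAB : ∀ ω, A (update ω i true) = B (update ω i false)) :
    (fun ω => if ω i = true then B ω else A ω) ∈ S.cubes k := by
  cases k with
  | zero => exact i.elim0
  | succ n =>
    let σ : Equiv.Perm (Fin (n+1)) := Equiv.swap i (Fin.last n)
    let r : Bool → (Fin n → Bool) → (Fin (n+1) → Bool) :=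
      fun b η j => (Fin.snoc η b : Fin (n+1) → Bool) (σ j)
    have hr : ∀ b, IsDiscreteCubeMorphism (r b) := by
      intro b
      apply mor_of
      intro j
      simp only [r]
      induction σ j using Fin.lastCases with
      | last => left; exact ⟨b, fun ω => by simp⟩
      | cast q => right; exact ⟨q, id, fun ω => by simp⟩
    have hσ : IsDiscreteCubeMorphism (fun (ω : Fin (n+1) → Bool) j => ω (σ j)) :=
      mor_of _ fun j => Or.inr ⟨σ j, id, fun _ => rfl⟩
    have hσσ : ∀ ω : Fin (n+1) → Bool, (fun j => ω (σ (σ j))) = ω := by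
      intro ω; funext j; simp [σ]
    have hsn : ∀ (ω : Fin (n+1) → Bool) (b : Bool), ω (Fin.last n) = b →
        (r b fun j => ω j.castSucc) = fun j => ω (σ j) := by
      intro ω b hb
      funext j
      simp only [r]
      induction σ j using Fin.lastCases with
      | last => simp [hb]
      | cast q => simp
    have key : ∀ D : (Fin (n+1) → Bool) → X, 
        concatCube (fun η => D (r false η)) (fun η => D (r true η))
          = fun ω => D (fun j => ω (σ j)) := by
      intro D
      funext ω
      unfold concatCube
      split_ifs with h
      · simp only [hsn ω true h]
      · simp only [hsn ω false (by simpa using h)]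
    have hmid : (fun η => B (r false η)) = (fun η => A (r true η)) := by
      funext η
      have h1 : r false η = update (r true η) i false := by
        funext j
        by_cases hj : j = i
        · subst hj; simp [r, σ]
        · rw [update_of_ne hj]
          simp only [r]
          have : σ j ≠ Fin.last n := by
            intro h
            apply hj
            apply σ.injective
            rw [h]; simp [σ]
          obtain ⟨q, hq⟩ := Fin.exists_castSucc_eq.2 this
          rw [← hq]; simp
      have h2 : r true η = update (r true η) i true := by
        funext j
        by_cases hj : j = i
        · subst hj; simp [r, σ]
        · rw [update_of_ne hj]
      rw [h1, ← hAB, ← h2]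
    have g := hg n (fun η => A (r false η)) (fun η => A (r true η)) (fun η => B (r true η))
      (hst _ (hr _) _ hA) (hst _ (hr _) _ hA) (hst _ (hr _) _ hB)
      (by rw [key A]; exact hst _ hσ _ hA)
      (by rw [← hmid, key B]; exact hst _ hσ _ hB)
    have := hst _ hσ _ g
    convert this using 1
    funext ω
    unfold concatCube
    have e1 : σ (Fin.last n) = i := by simp [σ]
    simp only [e1]
    split_ifs with h
    · rw [hsn (fun j => ω (σ j)) true (by simpa [e1] using h), hσσ]
    · rw [hsn (fun j => ω (σ j)) false (by simpa [e1] using h), hσσ]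

/-- The three segments `01`, `12`, `02` of `{0,1,2}`. -/
def seg (m : Fin 3) (b : Bool) : Fin 3 :=
  if m = 0 then (if b then 1 else 0) else if m = 1 then (if b then 2 else 1)
    else (if b then 2 else 0)

lemma tricube {S : CubeFamily X} (hst : Stab S) (hg : IsGluing S) {k : ℕ}
    (t : (Fin k → Fin 3) → X)
    (h : ∀ m : Fin k → Fin 3, (∀ i, m i ≠ 2) → (fun ω => t (fun i => seg (m i) (ω i))) ∈ S.cubes k) 
    (n : ℕ) : ∀ m : Fin k → Fin 3, (Finset.univ.filter fun i => m i = 2).card = n →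
      (fun ω : Fin k → Bool => t (fun i => seg (m i) (ω i))) ∈ S.cubes k := by
  induction n with
  | zero =>
    intro m hm
    apply h
    intro i hi
    rw [Finset.card_eq_zero] at hm
    have : i ∈ Finset.univ.filter fun i => m i = 2 := by simp [hi]
    rw [hm] at this
    simp at this
  | succ n ih =>
    intro m hm
    obtain ⟨i, hi⟩ : (Finset.univ.filter fun i => m i = 2).Nonempty := by
      rw [← Finset.card_pos]; omega
    have hi2 : m i = 2 := by simpa using hi
    have hc : ∀ a : Fin 3, a ≠ 2 →
        (Finset.univ.filter fun j => update m i a j = 2).card = n := by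
      intro a ha
      have : (Finset.univ.filter fun j => update m i a j = 2)
          = (Finset.univ.filter fun j => m j = 2).erase i := by
        ext j
        by_cases hj : j = i
        · subst hj; simp [ha]
        · simp [hj]
      rw [this, Finset.card_erase_of_mem hi, hm]; rfl
    have := glue_at hst hg i _ _ (ih (update m i 0) (hc 0 (by decide)))
      (ih (update m i 1) (hc 1 (by decide))) (by
        intro ω
        congr 1
        funext j
        by_cases hj : j = i
        · subst hj; simp [seg]
        · simp [hj])
    convert this using 1
    funext ω
    split_ifs with hω
    · congr 1
      funext j
      by_cases hj : j = i
      · subst hj; simp [seg, hi2, hω]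
      · simp [hj]
    · congr 1
      funext j
      by_cases hj : j = i
      · subst hj; simp [seg, hi2, hω]
      · simp [hj]

lemma tri_replace {S : CubeFamily X} (hst : Stab S) (hg : IsGluing S) {k : ℕ}
    (c : (Fin k → Bool) → X) (hc : c ∈ S.cubes k) (φ : Fin 3 → Bool) (y : X)
    (h1 : update (fun ω : Fin k → Bool => c (fun i => φ (seg 1 (ω i)))) (topVtx k) y ∈ S.cubes k) :
    update (fun ω : Fin k → Bool => c (fun i => φ (seg 2 (ω i)))) (topVtx k) y ∈ S.cubes k := by
  classical
  let t : (Fin k → Fin 3) → X := update (fun v => c (fun i => φ (v i))) (fun _ => 2) y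
  have ht : ∀ m : Fin 3, m ≠ 0 → (fun ω : Fin k → Bool => t (fun i => seg m (ω i)))
      = update (fun ω : Fin k → Bool => c (fun i => φ (seg m (ω i)))) (topVtx k) y := by
    intro m hm
    funext ω
    by_cases hω : ω = topVtx k
    · subst hω
      have : (fun i : Fin k => seg m (topVtx k i)) = fun _ => 2 := by
        funext i; unfold seg topVtx; fin_cases m <;> simp_all
      simp only [update_self, this, t]
    · have : (fun i : Fin k => seg m (ω i)) ≠ fun _ => 2 := by
        intro h
        apply hω
        funext i
        have := congrFun h i
        unfold topVtx
        revert this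
        unfold seg
        cases ω i <;> fin_cases m <;> simp_all
      simp only [t]
      rw [update_of_ne this, update_of_ne hω]
  rw [← ht 2 (by decide)]
  refine tricube hst hg t ?_ _ (fun _ => 2) rfl
  intro m hm
  by_cases hall : ∀ i, m i = 1
  · have : m = fun _ => 1 := funext hall
    subst this
    rw [ht 1 (by decide)]
    exact h1
  · push Not at hall
    obtain ⟨i, hi⟩ := hall
    have hi0 : m i = 0 := by
      have := hm i
      generalize m i = a at *
      fin_cases a <;> simp_all
    have : (fun ω : Fin k → Bool => t (fun i => seg (m i) (ω i)))
        = fun ω => c (fun i => φ (seg (m i) (ω i))) := by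
      funext ω
      simp only [t]
      rw [update_of_ne]
      intro h
      have := congrFun h i
      simp only [hi0] at this
      revert this
      unfold seg
      cases ω i <;> simp
    rw [this]
    exact hst (fun ω i => φ (seg (m i) (ω i)))
      (mor_of _ fun j => Or.inr ⟨j, fun b => φ (seg (m j) b), fun _ => rfl⟩) c hc

lemma canon_cube {S : CubeFamily X} (hst : Stab S) (hg : IsGluing S) {s : ℕ} {x y : X}
    (h : CanonRel S s x y) : update (fun _ => x) (topVtx (s+1)) y ∈ S.cubes (s+1) := by
  obtain ⟨c, hc, c', hc', hcc, rfl, rfl⟩ := h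
  have := tri_replace hst hg c hc (fun a => decide (a ≠ 1)) (c' (topVtx _)) (by
    convert hc' using 1
    funext ω
    by_cases hω : ω = topVtx _
    · subst hω; simp
    · rw [update_of_ne hω, ← hcc ω hω]
      congr 1
      funext i
      unfold seg
      cases ω i <;> simp)
  convert this using 1
  congr 1
  funext ω
  congr 1
  funext i
  unfold seg topVtx
  cases ω i <;> simp

lemma const_cube {S : CubeFamily X} (hst : Stab S) (h0 : S.cubes 0 = Set.univ) (k : ℕ) (x : X) :
    (fun _ => x) ∈ S.cubes k := 
  hst (l := 0) (fun _ => fun i => i.elim0) (fun j => j.elim0) (fun _ => x) (by rw [h0]; trivial)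

lemma canon_symm {S : CubeFamily X} {s : ℕ} {x y : X} (h : CanonRel S s x y) :
    CanonRel S s y x := by
  obtain ⟨c, hc, c', hc', hcc, h1, h2⟩ := h
  exact ⟨c', hc', c, hc, fun ω hω => (hcc ω hω).symm, h2, h1⟩

lemma canon_trans {S : CubeFamily X} (hst : Stab S) (hg : IsGluing S) {s : ℕ} {x y z : X}
    (h : CanonRel S s x y) (h' : CanonRel S s y z) : CanonRel S s x z :=
  ⟨_, canon_cube hst hg (canon_symm h), _, canon_cube hst hg h',
    fun ω hω => by rw [update_of_ne hω, update_of_ne hω], by simp, by simp⟩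

lemma canon_refl {S : CubeFamily X} (hst : Stab S) (h0 : S.cubes 0 = Set.univ) {s : ℕ} (x : X) :
    CanonRel S s x x :=
  ⟨_, const_cube hst h0 _ x, _, const_cube hst h0 _ x, fun _ _ => rfl, rfl, rfl⟩

lemma replace_top {S : CubeFamily X} (hst : Stab S) (hg : IsGluing S) {s : ℕ}
    (c : (Fin (s+1) → Bool) → X) (hc : c ∈ S.cubes (s+1)) (y : X)
    (h : CanonRel S s (c (topVtx _)) y) : update c (topVtx _) y ∈ S.cubes (s+1) := by
  have := tri_replace hst hg c hc (fun a => decide (a ≠ 0)) y (by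
    convert canon_cube hst hg h using 1
    congr 1
    funext ω
    congr 1
    funext i
    unfold seg topVtx
    cases ω i <;> simp)
  convert this using 1
  congr 1
  funext ω
  congr 1
  funext i
  unfold seg
  cases ω i <;> simp

lemma replace_at {S : CubeFamily X} (hst : Stab S) (hg : IsGluing S) {s : ℕ}
    (c : (Fin (s+1) → Bool) → X) (hc : c ∈ S.cubes (s+1)) (v : Fin (s+1) → Bool) (y : X)
    (h : CanonRel S s (c v) y) : update c v y ∈ S.cubes (s+1) := by
  let ρ : (Fin (s+1) → Bool) → (Fin (s+1) → Bool) := fun ω i => if v i then ω i else !(ω i)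
  have hρ : IsDiscreteCubeMorphism ρ :=
    mor_of _ fun j => Or.inr ⟨j, fun b => if v j then b else !b, fun _ => rfl⟩
  have hρρ : ∀ ω, ρ (ρ ω) = ω := by
    intro ω; funext i; simp only [ρ]; split_ifs <;> simp
  have hρt : ρ (topVtx _) = v := by
    funext i; simp only [ρ, topVtx]; cases v i <;> simp
  have := hst ρ hρ _ (replace_top hst hg (fun ω => c (ρ ω)) (hst ρ hρ c hc) y (by rwa [hρt]))
  convert this using 1
  funext ω
  by_cases hω : ω = v
  · subst hω
    rw [← hρt, hρρ]; simp
  · rw [update_of_ne hω, update_of_ne, hρρ]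
    intro h
    apply hω
    rw [← hρρ ω, h, hρt]

lemma replace_all {S : CubeFamily X} (hst : Stab S) (hg : IsGluing S) {s : ℕ}
    (c c' : (Fin (s+1) → Bool) → X) (hc : c ∈ S.cubes (s+1))
    (h : ∀ ω, CanonRel S s (c ω) (c' ω)) : c' ∈ S.cubes (s+1) := by
  classical
  have : ∀ A : Finset (Fin (s+1) → Bool), (fun ω => if ω ∈ A then c' ω else c ω) ∈ S.cubes (s+1) := by
    intro A
    induction A using Finset.induction_on with
    | empty => simpa using hc
    | insert a A ha ih =>
      have := replace_at hst hg _ ih a (c' a) (by simpa [ha] using h a)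
      convert this using 1
      funext ω
      by_cases hω : ω = a
      · subst hω; simp
      · simp [hω]
  simpa using this Finset.univ

lemma replace_le {S : CubeFamily X} (hst : Stab S) (hg : IsGluing S) {s k : ℕ} (hk : k ≤ s + 1)
    (c c' : (Fin k → Bool) → X) (hc : c ∈ S.cubes k)
    (h : ∀ ω, CanonRel S s (c ω) (c' ω)) : c' ∈ S.cubes k := by
  let ρ : (Fin (s+1) → Bool) → (Fin k → Bool) := fun ω i => ω (Fin.castLE hk i)
  have hρ : IsDiscreteCubeMorphism ρ := mor_of _ fun j => Or.inr ⟨Fin.castLE hk j, id, fun _ => rfl⟩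
  let ψ : (Fin k → Bool) → (Fin (s+1) → Bool) := 
    fun ω i => if hi : i.1 < k then ω ⟨i.1, hi⟩ else false
  have hψ : IsDiscreteCubeMorphism ψ := mor_of _ fun j => by
    by_cases hj : j.1 < k
    · right; exact ⟨⟨j.1, hj⟩, id, fun ω => by simp [ψ, hj]⟩
    · left; exact ⟨false, fun ω => by simp [ψ, hj]⟩
  have := hst ψ hψ _ (replace_all hst hg (fun ω => c (ρ ω)) (fun ω => c' (ρ ω)) (hst ρ hρ c hc)
    (fun ω => h _))
  convert this using 1
  funext ω
  congr 1
  funext i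
  simp [ρ, ψ]

/-- Two `k`-cubes, `k ≥ s+1`, with pointwise `∼ₛ` values off the top have `∼ₛ` tops. -/
lemma top_rel {S : CubeFamily X} (hst : Stab S) (h0 : S.cubes 0 = Set.univ)
    (hg : IsGluing S) {s k : ℕ} (hk : s + 1 ≤ k)
    (c c' : (Fin k → Bool) → X) (hc : c ∈ S.cubes k) (hc' : c' ∈ S.cubes k)
    (h : ∀ ω, ω ≠ topVtx k → CanonRel S s (c ω) (c' ω)) :
    CanonRel S s (c (topVtx k)) (c' (topVtx k)) := by
  let ψ : (Fin (s+1) → Bool) → (Fin k → Bool) := 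
    fun ω i => if hi : i.1 < s+1 then ω ⟨i.1, hi⟩ else true
  have hψ : IsDiscreteCubeMorphism ψ := mor_of _ fun j => by
    by_cases hj : j.1 < s+1
    · right; exact ⟨⟨j.1, hj⟩, id, fun ω => dif_pos hj⟩
    · left; exact ⟨true, fun ω => dif_neg hj⟩
  have hψt : ψ (topVtx _) = topVtx k := by
    funext i; simp [ψ, topVtx]
  have hψn : ∀ ω, ω ≠ topVtx _ → ψ ω ≠ topVtx k := by
    intro ω hω h
    apply hω
    funext i
    have := congrFun h (Fin.castLE hk i)
    simp only [ψ] at this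
    rw [dif_pos (by exact i.2)] at this
    exact this
  refine ⟨update (fun ω => c' (ψ ω)) (topVtx _) (c (topVtx k)), ?_, _, hst ψ hψ _ hc', ?_, ?_, ?_⟩
  · refine replace_all hst hg (fun ω => c (ψ ω)) _ (hst ψ hψ _ hc) ?_
    intro ω
    by_cases hω : ω = topVtx _
    · subst hω; simp [hψt]; exact canon_refl hst h0 _
    · rw [update_of_ne hω]; exact h _ (hψn ω hω)
  · intro ω hω; rw [update_of_ne hω]
  · simp
  · simp [hψt]

/-- Lifting of partial configurations on lower sets. -/
lemma lift_lower {Q : Type*} {S : CubeFamily X} {T : CubeFamily Q} (hst : Stab S) (hstT : Stab T)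
    (p : X → Q) (hp : ∀ k, HasCompletionAt S T p k) [Nonempty X] {k : ℕ}
    (lam : (Fin k → Bool) → Q) (n : ℕ) :
    ∀ D : Finset (Fin k → Bool), D.card = n → (∀ ω ∈ D, ∀ η, η ≤ ω → η ∈ D) →
      (∀ ω ∈ D, (fun η => lam (η ⊓ ω)) ∈ T.cubes k) →
      ∃ mu : (Fin k → Bool) → X, (∀ ω ∈ D, p (mu ω) = lam ω) ∧
        ∀ ω ∈ D, (fun η => mu (η ⊓ ω)) ∈ S.cubes k := by
  classical
  induction n with
  | zero =>
    intro D hD _ _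
    rw [Finset.card_eq_zero] at hD
    subst hD
    exact ⟨fun _ => Classical.arbitrary X, by simp, by simp⟩
  | succ n ih =>
    intro D hD hlow hlam
    obtain ⟨ω, hωm⟩ := D.exists_maximal (by rw [← Finset.card_pos]; omega)
    have hωD : ω ∈ D := hωm.1
    have hmax : ∀ η ∈ D, ω ≤ η → η = ω := fun η hη h => le_antisymm (hωm.2 hη h) h
    obtain ⟨mu, hmu1, hmu2⟩ := ih (D.erase ω) (by rw [Finset.card_erase_of_mem hωD, hD]; rfl)
      (by
        intro a ha η hη
        rw [Finset.mem_erase] at ha ⊢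
        refine ⟨?_, hlow a ha.2 η hη⟩
        rintro rfl
        exact ha.1 (hmax a ha.2 hη))
      (fun a ha => hlam a (Finset.mem_of_mem_erase ha))
    obtain ⟨m, ⟨e⟩⟩ : ∃ m, Nonempty ({i : Fin k // ω i = true} ≃ Fin m) :=
      ⟨_, ⟨Fintype.equivFin _⟩⟩
    let ρ : (Fin m → Bool) → (Fin k → Bool) :=
      fun η i => if h : ω i = true then η (e ⟨i, h⟩) else false
    let ψ : (Fin k → Bool) → (Fin m → Bool) := fun η j => η (e.symm j).1
    have hρ : IsDiscreteCubeMorphism ρ := mor_of _ fun j => by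
      by_cases hj : ω j = true
      · right; exact ⟨e ⟨j, hj⟩, id, fun _ => by simp [ρ, hj]⟩
      · left; exact ⟨false, fun _ => by simp [ρ, hj]⟩
    have hψ : IsDiscreteCubeMorphism ψ := mor_of _ fun j => Or.inr ⟨(e.symm j).1, id, fun _ => rfl⟩
    have hψρ : ∀ η, ψ (ρ η) = η := by
      intro η; funext j
      have := (e.symm j).2
      simp [ψ, ρ, this]
    have hρψ : ∀ η, ρ (ψ η) = η ⊓ ω := by
      intro η; funext i
      by_cases hi : ω i = true
      · simp [ρ, ψ, hi]
      · simp [ρ, hi]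
    have hρω : ∀ η, ρ η ⊓ ω = ρ η := by
      intro η; rw [← hρψ, hψρ]
    have hρt : ρ (topVtx m) = ω := by
      funext i
      by_cases hi : ω i = true
      · simp [ρ, topVtx, hi]
      · simp [ρ, hi]
    have hρn : ∀ η, η ≠ topVtx m → ρ η ≠ ω := by
      intro η hη h
      apply hη
      rw [← hψρ η, h, ← hρt, hψρ]
    obtain ⟨c₁, hc₁, hc₁m, hc₁p⟩ := hp m (fun η => mu (ρ η)) (fun η => lam (ρ η)) (by
        intro j
        have hj := (e.symm j).2
        have hmem : update ω (e.symm j).1 false ∈ D.erase ω := by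
          rw [Finset.mem_erase]
          constructor
          · intro h
            have := congrFun h (e.symm j).1
            rw [update_self, hj] at this
            simp at this
          · apply hlow ω hωD
            intro i
            by_cases hi : i = (e.symm j).1
            · subst hi; simp
            · rw [update_of_ne hi]
        have := hst ρ hρ _ (hmu2 _ hmem)
        convert this using 1
        funext η
        beta_reduce
        congr 1
        funext i
        by_cases hi : i = (e.symm j).1
        · subst hi
          simp [ρ, hj]
        · by_cases hi' : ω i = true
          · have : e ⟨i, hi'⟩ ≠ j := by
              intro h; apply hi; rw [← h]; simp
            simp [ρ, hi, hi', this]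
          · simp [ρ, hi'])
      (by
        have := hstT ρ hρ _ (hlam ω hωD)
        simpa only [hρω] using this)
      (by
        intro η hη
        apply hmu1
        rw [Finset.mem_erase]
        refine ⟨hρn η hη, hlow ω hωD _ ?_⟩
        rw [← hρω]; exact inf_le_right)
    refine ⟨update mu ω (c₁ (topVtx m)), ?_, ?_⟩
    · intro η hη
      by_cases h : η = ω
      · subst h
        rw [update_self]
        have := congrFun hc₁p (topVtx m)
        simpa only [hρt] using this
      · rw [update_of_ne h]
        exact hmu1 η (Finset.mem_erase.2 ⟨h, hη⟩)
    · intro η hη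
      by_cases h : η = ω
      · subst h
        convert hst ψ hψ _ hc₁ using 1
        funext ξ
        rw [← hρψ]
        by_cases ht : ψ ξ = topVtx m
        · rw [ht, hρt, update_self]
        · rw [update_of_ne (hρn _ ht), hc₁m _ ht]
      · convert hmu2 η (Finset.mem_erase.2 ⟨h, hη⟩) using 1
        funext ξ
        rw [update_of_ne]
        intro h'
        exact h (hmax η hη (by rw [← h']; exact inf_le_right))

lemma lift_corner {Q : Type*} {S : CubeFamily X} {T : CubeFamily Q} (hst : Stab S) (hstT : Stab T)
    (p : X → Q) (hp : ∀ k, HasCompletionAt S T p k) [Nonempty X] {k : ℕ}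
    (lam : (Fin k → Bool) → Q) (hlam : IsCubeCorner T lam) :
    ∃ mu : (Fin k → Bool) → X, IsCubeCorner S mu ∧ ∀ ω, ω ≠ topVtx k → p (mu ω) = lam ω := by
  classical
  obtain ⟨mu, h1, h2⟩ := lift_lower hst hstT p hp lam _ (Finset.univ.erase (topVtx k)) rfl
    (by
      intro ω hω η hη
      simp only [Finset.mem_erase, Finset.mem_univ, and_true] at hω ⊢
      rintro rfl
      apply hω
      funext i
      have h : true ≤ ω i := hη i
      exact top_le_iff.1 h)
    (by
      intro ω hω
      simp only [Finset.mem_erase, Finset.mem_univ, and_true] at hω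
      obtain ⟨i, hi⟩ : ∃ i, ω i = false := by
        by_contra! h
        exact hω (funext fun i => by simpa [topVtx] using h i)
      have := hstT (fun η => η ⊓ ω) (mor_of _ fun j => Or.inr ⟨j, fun b => b && ω j, fun η => rfl⟩)
        _ (hlam i)
      convert this using 1
      funext η
      congr 1
      funext j
      by_cases hj : j = i
      · subst hj; simp [hi]
      · simp [hj])
  refine ⟨mu, ?_, ?_⟩
  · intro i
    convert h2 (update (topVtx k) i false) (by
      simp only [Finset.mem_erase, Finset.mem_univ, and_true]
      intro h
      have := congrFun h i
      simp [topVtx] at this) using 1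
    funext ω
    congr 1
    funext j
    by_cases hj : j = i
    · subst hj; simp
    · simp [hj, topVtx]
  · intro ω hω
    exact h1 ω (by simpa using hω)

lemma quot_eq {Y : Type*} {S : CubeFamily X} (hst : Stab S) (h0 : S.cubes 0 = Set.univ)
    (hg : IsGluing S) (f : X → Y) (s : ℕ) {x y : X}
    (h : Quot.mk (RelCanonRel S f s) x = Quot.mk _ y) : RelCanonRel S f s x y := by
  have he : Equivalence (RelCanonRel S f s) :=
    ⟨fun x => ⟨canon_refl hst h0 x, rfl⟩, fun h => ⟨canon_symm h.1, h.2.symm⟩,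
      fun h h' => ⟨canon_trans hst hg h.1 h'.1, h.2.trans h'.2⟩⟩
  exact he.eqvGen_iff.1 (Quot.eqvGen_exact h)

end CubeAux

open CubeAux

/-- let `f : X → Y` be a fibration between compact gluing cubespaces and
`s ≥ 0`.  Then the projection `π_{f,s} : X → X/∼_{f,s}` is a fibration, and `f` factors
through the induced map `g : X/∼_{f,s} → Y` (so `f = g ∘ π_{f,s}`), which is an
`s`-fibration, i.e. a fibration with `(s+1)`-uniqueness. -/
theorem canonical_s_fibration_factor {X Y : Type*} [MetricSpace X] [MetricSpace Y]
    [CompactSpace X] [CompactSpace Y]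
    (S : CubeFamily X) (T : CubeFamily Y) (hS : S.IsCubespace) (hT : T.IsCubespace)
    (hgS : IsGluing S) (hgT : IsGluing T)
    (f : X → Y) (hf : IsFibration S T f) (s : ℕ) :
    IsFibration S (quotFamilyRel S f s) (Quot.mk (RelCanonRel S f s)) ∧
    IsFibration (quotFamilyRel S f s) T (Quot.lift f fun _ _ h => h.2) ∧
    HasUniquenessAt (quotFamilyRel S f s) T (Quot.lift f fun _ _ h => h.2) (s + 1) := by
  have hst : Stab S := hS.2.2
  have h0 := hS.2.1
  have hq : ∀ {x y : X}, Quot.mk (RelCanonRel S f s) x = Quot.mk _ y → RelCanonRel S f s x y :=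
    fun h => quot_eq hst h0 hgS f s h
  have hpi : IsFibration S (quotFamilyRel S f s) (Quot.mk (RelCanonRel S f s)) := by
    refine ⟨⟨continuous_quot_mk, fun k c hc => ⟨c, hc, rfl⟩⟩, ?_⟩
    rintro k lam _ hlam ⟨c, hc, rfl⟩ hag
    have hrel : ∀ ω, ω ≠ topVtx k → RelCanonRel S f s (lam ω) (c ω) := fun ω hω => hq (hag ω hω)
    rcases le_total k (s + 1) with hk | hk
    · refine ⟨update lam (topVtx k) (c (topVtx k)), ?_, fun ω hω => update_of_ne hω _ _, ?_⟩
      · refine replace_le hst hgS hk c _ hc fun ω => ?_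
        by_cases hω : ω = topVtx k
        · subst hω; rw [update_self]; exact canon_refl hst h0 _
        · rw [update_of_ne hω]; exact canon_symm (hrel ω hω).1
      · funext ω
        by_cases hω : ω = topVtx k
        · subst hω; rw [update_self]
        · rw [update_of_ne hω]; exact hag ω hω
    · obtain ⟨c₁, hc₁, h1, h2⟩ := hf.2 k lam (fun ω => f (c ω)) hlam (hf.1.2 k c hc)
        fun ω hω => (hrel ω hω).2
      refine ⟨c₁, hc₁, h1, ?_⟩
      funext ω
      by_cases hω : ω = topVtx k
      · subst hω
        apply Quot.sound
        refine ⟨top_rel hst h0 hgS hk c₁ c hc₁ hc fun η hη => ?_, congrFun h2 _⟩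
        rw [h1 η hη]
        exact (hrel η hη).1
      · rw [h1 ω hω]; exact hag ω hω
  refine ⟨hpi, ⟨⟨?_, ?_⟩, ?_⟩, ?_⟩
  · exact continuous_quot_lift _ hf.1.1
  · rintro k _ ⟨c, hc, rfl⟩
    exact hf.1.2 k c hc
  · intro k lam c hlam hc hag
    obtain ⟨x⟩ : Nonempty X := by
      obtain ⟨x, -⟩ := Quot.exists_rep (lam (topVtx k))
      exact ⟨x⟩
    haveI : Nonempty X := ⟨x⟩
    have hstQ : Stab (quotFamilyRel S f s) := by
      rintro k l ρ hρ _ ⟨d, hd, rfl⟩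
      exact ⟨_, hst ρ hρ d hd, rfl⟩
    obtain ⟨mu, hmu, hmul⟩ := lift_corner hst hstQ _ hpi.2 lam hlam
    obtain ⟨c₁, hc₁, h1, h2⟩ := hf.2 k mu c hmu hc (by
      intro ω hω
      rw [← hag ω hω, ← hmul ω hω])
    refine ⟨_, ⟨c₁, hc₁, rfl⟩, ?_, h2⟩
    intro ω hω
    rw [← hmul ω hω, h1 ω hω]
  · rintro _ ⟨c, hc, rfl⟩ _ ⟨c', hc', rfl⟩ hag hfe
    funext ω
    by_cases hω : ω = topVtx (s + 1)
    · subst hω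
      apply Quot.sound
      exact ⟨top_rel hst h0 hgS le_rfl c c' hc hc' fun η hη => (hq (hag η hη)).1, congrFun hfe _⟩
    · exact hag ω hω
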